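/- arXiv:2007.11014 — 2 statements merged into one kernel-verified Lean document; each statement's English description precedes it below -/
import Mathlib

section
/- For any field F and any x ≠ y in F^♭, the five-term element lies in the kernel of δ_F; that is, x∧(1−x) − y∧(1−y) + (y/x)∧(1−y/x) + ((1−x)/(1−y))∧(1−(1−x)/(1−y)) − ((1−x⁻¹)/(1−y⁻¹))∧(1−(1−x⁻¹)/(1−y⁻¹)) = 0 in ∧²F*. Consequently δ_F(R_5(F)) = 0. -/
open TensorProduct

namespace BlochPaper

/-- `F^♭ = F \ {0,1}`. -/
def Flat (F : Type*) [Field F] : Type _ := {x : F // x ≠ 0 ∧ x ≠ 1}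

variable (F : Type*) [Field F]

/-- `ℤ[F^♭]`, the free abelian group on `F^♭`. -/
abbrev ZFlat : Type _ := FreeAbelianGroup (Flat F)

/-- `F* ⊗_ℤ F*` (written additively). -/
abbrev Tens : Type _ := TensorProduct ℤ (Additive Fˣ) (Additive Fˣ)

/-- relations `x⊗y + y⊗x`. -/
noncomputable def symRel : AddSubgroup (Tens F) :=
  AddSubgroup.closure {z | ∃ x y : Fˣ,
    z = Additive.ofMul x ⊗ₜ[ℤ] Additive.ofMul y + Additive.ofMul y ⊗ₜ[ℤ] Additive.ofMul x}

/-- `∧² F*`. -/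
abbrev Wedge : Type _ := Tens F ⧸ symRel F

/-- relations `x⊗y + y⊗x` and `x⊗x - x⊗(-1)`. -/
noncomputable def symRel2 : AddSubgroup (Tens F) :=
  AddSubgroup.closure
    ({z | ∃ x y : Fˣ,
        z = Additive.ofMul x ⊗ₜ[ℤ] Additive.ofMul y + Additive.ofMul y ⊗ₜ[ℤ] Additive.ofMul x} ∪
     {z | ∃ x : Fˣ,
        z = Additive.ofMul x ⊗ₜ[ℤ] Additive.ofMul x
          - Additive.ofMul x ⊗ₜ[ℤ] Additive.ofMul (-1 : Fˣ)})

/-- `∧~² F*`. -/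
abbrev TWedge : Type _ := Tens F ⧸ symRel2 F

variable {F}

/-- `x ∧ y` in `∧² F*`. -/
noncomputable def wedge (x y : Fˣ) : Wedge F :=
  QuotientAddGroup.mk (Additive.ofMul x ⊗ₜ[ℤ] Additive.ofMul y)

/-- `x ∧~ y` in `∧~² F*`. -/
noncomputable def twedge (x y : Fˣ) : TWedge F :=
  QuotientAddGroup.mk (Additive.ofMul x ⊗ₜ[ℤ] Additive.ofMul y)

/-- `x` as a unit, for `x ∈ F^♭`. -/
def unitsOf (x : Flat F) : Fˣ := Units.mk0 x.1 x.2.1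

/-- `1 - x` as a unit, for `x ∈ F^♭`. -/
def unitsOneSub (x : Flat F) : Fˣ :=
  Units.mk0 (1 - x.1) (sub_ne_zero_of_ne (Ne.symm x.2.2))

variable (F)

/-- Suslin's map `δ_F : ℤ[F^♭] → ∧²F*`, `[x] ↦ x ∧ (1-x)`. -/
noncomputable def dlt : ZFlat F →+ Wedge F :=
  FreeAbelianGroup.lift (fun x : Flat F => wedge (unitsOf x) (unitsOneSub x))

/-- The map `∂_F : ℤ[F^♭] → ∧~²F*`, `[x] ↦ x ∧~ (1-x)`. -/
noncomputable def bd : ZFlat F →+ TWedge F :=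
  FreeAbelianGroup.lift (fun x : Flat F => twedge (unitsOf x) (unitsOneSub x))

variable {F}

lemma flat_div (x y : Flat F) (h : x ≠ y) : y.1 / x.1 ≠ 0 ∧ y.1 / x.1 ≠ 1 := by
  refine ⟨div_ne_zero y.2.1 x.2.1, fun hh => h ?_⟩
  exact Subtype.ext (((div_eq_one_iff_eq x.2.1).mp hh).symm)

lemma flat_sub (x y : Flat F) (h : x ≠ y) :
    (1 - x.1) / (1 - y.1) ≠ 0 ∧ (1 - x.1) / (1 - y.1) ≠ 1 := by
  have hx : (1 : F) - x.1 ≠ 0 := sub_ne_zero_of_ne (Ne.symm x.2.2)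
  have hy : (1 : F) - y.1 ≠ 0 := sub_ne_zero_of_ne (Ne.symm y.2.2)
  refine ⟨div_ne_zero hx hy, fun hh => h ?_⟩
  have := (div_eq_one_iff_eq hy).mp hh
  exact Subtype.ext (by linear_combination -this)

lemma flat_inv (x : Flat F) : x.1⁻¹ ≠ 0 ∧ x.1⁻¹ ≠ 1 :=
  ⟨inv_ne_zero x.2.1, fun hh => x.2.2 (by simpa [inv_eq_one] using hh)⟩

lemma flat_subinv (x y : Flat F) (h : x ≠ y) :
    (1 - x.1⁻¹) / (1 - y.1⁻¹) ≠ 0 ∧ (1 - x.1⁻¹) / (1 - y.1⁻¹) ≠ 1 := by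
  have hx : (1 : F) - x.1⁻¹ ≠ 0 := sub_ne_zero_of_ne (Ne.symm (flat_inv x).2)
  have hy : (1 : F) - y.1⁻¹ ≠ 0 := sub_ne_zero_of_ne (Ne.symm (flat_inv y).2)
  refine ⟨div_ne_zero hx hy, fun hh => h ?_⟩
  have h2 := (div_eq_one_iff_eq hy).mp hh
  have h3 : x.1⁻¹ = y.1⁻¹ := by linear_combination -h2
  exact Subtype.ext (inv_injective h3)

/-- the five-term element `[x] - [y] + [y/x] + [(1-x)/(1-y)] - [(1-x⁻¹)/(1-y⁻¹)]`. -/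
noncomputable def fiveEl (x y : Flat F) (h : x ≠ y) : ZFlat F :=
  FreeAbelianGroup.of x - FreeAbelianGroup.of y
    + FreeAbelianGroup.of ⟨y.1 / x.1, flat_div x y h⟩
    + FreeAbelianGroup.of ⟨(1 - x.1) / (1 - y.1), flat_sub x y h⟩
    - FreeAbelianGroup.of ⟨(1 - x.1⁻¹) / (1 - y.1⁻¹), flat_subinv x y h⟩

/-- the element `[x] + [x⁻¹]`. -/
noncomputable def invEl (x : Flat F) : ZFlat F :=
  FreeAbelianGroup.of x + FreeAbelianGroup.of ⟨x.1⁻¹, flat_inv x⟩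

variable (F)

/-- `R_5(F)`. -/
noncomputable def R5 : AddSubgroup (ZFlat F) :=
  AddSubgroup.closure {z | ∃ (x y : Flat F) (h : x ≠ y), z = fiveEl x y h}

/-- `R_{5,2}(F)`. -/
noncomputable def R52 : AddSubgroup (ZFlat F) :=
  AddSubgroup.closure
    ({z | ∃ (x y : Flat F) (h : x ≠ y), z = fiveEl x y h} ∪
     {z | ∃ x : Flat F, z = invEl x})

end BlochPaper

namespace BlochPaper

section Aux

variable {F : Type*} [Field F]

lemma wedge_mul_left (a b c : Fˣ) : wedge (a * b) c = wedge a c + wedge b c := by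
  unfold wedge
  rw [ofMul_mul, TensorProduct.add_tmul]
  rfl

lemma wedge_mul_right (a b c : Fˣ) : wedge a (b * c) = wedge a b + wedge a c := by
  unfold wedge
  rw [ofMul_mul, TensorProduct.tmul_add]
  rfl

lemma wedge_antisymm (a b : Fˣ) : wedge a b + wedge b a = 0 := by
  unfold wedge
  rw [← QuotientAddGroup.mk_add, QuotientAddGroup.eq_zero_iff]
  exact AddSubgroup.subset_closure ⟨a, b, rfl⟩

lemma wedge_div_left (a b c : Fˣ) : wedge (a / b) c = wedge a c - wedge b c := by
  rw [eq_sub_iff_add_eq, ← wedge_mul_left, div_mul_cancel]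

lemma wedge_div_right (a b c : Fˣ) : wedge a (b / c) = wedge a b - wedge a c := by
  rw [eq_sub_iff_add_eq, ← wedge_mul_right, div_mul_cancel]

lemma five_term_aux (x y : Flat F) (h : x ≠ y) :
    (wedge (unitsOf x) (unitsOneSub x)
      - wedge (unitsOf y) (unitsOneSub y)
      + wedge (unitsOf (⟨y.1 / x.1, flat_div x y h⟩ : Flat F))
          (unitsOneSub (⟨y.1 / x.1, flat_div x y h⟩ : Flat F))
      + wedge (unitsOf (⟨(1 - x.1) / (1 - y.1), flat_sub x y h⟩ : Flat F))
          (unitsOneSub (⟨(1 - x.1) / (1 - y.1), flat_sub x y h⟩ : Flat F))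
      - wedge (unitsOf (⟨(1 - x.1⁻¹) / (1 - y.1⁻¹), flat_subinv x y h⟩ : Flat F))
          (unitsOneSub (⟨(1 - x.1⁻¹) / (1 - y.1⁻¹), flat_subinv x y h⟩ : Flat F)) : Wedge F)
      = 0 := by
  have hx0 : x.1 ≠ 0 := x.2.1
  have hy0 : y.1 ≠ 0 := y.2.1
  have hx1 : (1 : F) - x.1 ≠ 0 := sub_ne_zero_of_ne (Ne.symm x.2.2)
  have hy1 : (1 : F) - y.1 ≠ 0 := sub_ne_zero_of_ne (Ne.symm y.2.2)
  have he : x.1 - y.1 ≠ 0 := sub_ne_zero_of_ne (fun hh => h (Subtype.ext hh))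
  have hy1' : y.1 - 1 ≠ 0 := sub_ne_zero_of_ne y.2.2
  have hyi : (1 : F) - y.1⁻¹ ≠ 0 := sub_ne_zero_of_ne (Ne.symm (flat_inv y).2)
  have key : (1 - x.1⁻¹) / (1 - y.1⁻¹) = (y.1 * (1 - x.1)) / (x.1 * (1 - y.1)) := by
    rw [div_eq_div_iff hyi (mul_ne_zero hx0 hy1)]
    field_simp
    ring
  have e3 : unitsOf (⟨y.1 / x.1, flat_div x y h⟩ : Flat F) = unitsOf y / unitsOf x := by
    ext; simp [unitsOf]
  have e3' : unitsOneSub (⟨y.1 / x.1, flat_div x y h⟩ : Flat F)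
      = Units.mk0 _ he / unitsOf x := by
    ext; simp [unitsOf, unitsOneSub]; field_simp
  have e4 : unitsOf (⟨(1 - x.1) / (1 - y.1), flat_sub x y h⟩ : Flat F)
      = unitsOneSub x / unitsOneSub y := by
    ext; simp [unitsOf, unitsOneSub]
  have e4' : unitsOneSub (⟨(1 - x.1) / (1 - y.1), flat_sub x y h⟩ : Flat F)
      = Units.mk0 _ he / unitsOneSub y := by
    ext; simp [unitsOneSub]; field_simp; ring
  have e5 : unitsOf (⟨(1 - x.1⁻¹) / (1 - y.1⁻¹), flat_subinv x y h⟩ : Flat F)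
      = (unitsOf y * unitsOneSub x) / (unitsOf x * unitsOneSub y) := by
    ext; simp only [unitsOf, unitsOneSub, Units.val_mk0, Units.val_div_eq_div_val, Units.val_mul]
    exact key
  have e5' : unitsOneSub (⟨(1 - x.1⁻¹) / (1 - y.1⁻¹), flat_subinv x y h⟩ : Flat F)
      = Units.mk0 _ he / (unitsOf x * unitsOneSub y) := by
    ext; simp only [unitsOf, unitsOneSub, Units.val_mk0, Units.val_div_eq_div_val, Units.val_mul]
    rw [key]; field_simp; ring
  rw [e3, e3', e4, e4', e5, e5']
  generalize unitsOf x = a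
  generalize unitsOf y = b
  generalize unitsOneSub x = c
  generalize unitsOneSub y = d
  generalize Units.mk0 _ he = e
  simp only [wedge_mul_left, wedge_mul_right, wedge_div_left, wedge_div_right]
  have h1 := eq_neg_of_add_eq_zero_left (wedge_antisymm c a)
  have h2 := eq_neg_of_add_eq_zero_left (wedge_antisymm d a)
  rw [h1, h2]
  abel

lemma dlt_five (a b c d e : Flat F) :
    dlt F (FreeAbelianGroup.of a - FreeAbelianGroup.of b + FreeAbelianGroup.of c
      + FreeAbelianGroup.of d - FreeAbelianGroup.of e)
    = wedge (unitsOf a) (unitsOneSub a) - wedge (unitsOf b) (unitsOneSub b)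
      + wedge (unitsOf c) (unitsOneSub c) + wedge (unitsOf d) (unitsOneSub d)
      - wedge (unitsOf e) (unitsOneSub e) := by
  simp [dlt]

end Aux

/-- For any field `F` and `x ≠ y` in `F^♭`, the five-term element lies in the kernel of
`δ_F`: the alternating sum of the elements `z ∧ (1 - z)`, for `z` running through the five
arguments `x`, `y`, `y/x`, `(1-x)/(1-y)`, `(1-x⁻¹)/(1-y⁻¹)`, vanishes in `∧²F*`.
Consequently `δ_F(R_5(F)) = 0`. -/
theorem five_term_in_ker_delta (F : Type*) [Field F] (x y : Flat F) (h : x ≠ y) :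
    (wedge (unitsOf x) (unitsOneSub x)
      - wedge (unitsOf y) (unitsOneSub y)
      + wedge (unitsOf (⟨y.1 / x.1, flat_div x y h⟩ : Flat F))
          (unitsOneSub (⟨y.1 / x.1, flat_div x y h⟩ : Flat F))
      + wedge (unitsOf (⟨(1 - x.1) / (1 - y.1), flat_sub x y h⟩ : Flat F))
          (unitsOneSub (⟨(1 - x.1) / (1 - y.1), flat_sub x y h⟩ : Flat F))
      - wedge (unitsOf (⟨(1 - x.1⁻¹) / (1 - y.1⁻¹), flat_subinv x y h⟩ : Flat F))
          (unitsOneSub (⟨(1 - x.1⁻¹) / (1 - y.1⁻¹), flat_subinv x y h⟩ : Flat F)) : Wedge F)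
      = 0 ∧
    ∀ z ∈ R5 F, dlt F z = 0 := by
  refine ⟨five_term_aux x y h, fun z hz => ?_⟩
  have hle : R5 F ≤ (dlt F).ker := by
    unfold R5
    rw [AddSubgroup.closure_le]
    rintro _ ⟨u, v, huv, rfl⟩
    have := five_term_aux u v huv
    exact (dlt_five u v _ _ _).trans this
  exact hle hz

end BlochPaper
end

section
/- Let k be a field, n ≥ 1, K = k(t₁,…,tₙ), and let f ∈ K with f ∉ {0,1} be such that cf is not a square in K for any c ∈ k*. Then δ_K([f] + [f⁻¹]) = f ∧ (−f) ≠ 0 in ∧²K*; in particular [f] + [f⁻¹] does not lie in R_5(K). -/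
open TensorProduct

namespace BlochPaper


section WedgeLemmas

variable {F : Type*} [Field F]

lemma wedge_mul_left_s7 (x y z : Fˣ) : wedge (x * y) z = wedge x z + wedge y z := by
  unfold wedge
  rw [ofMul_mul, TensorProduct.add_tmul]
  rfl

lemma wedge_mul_right_s7 (x y z : Fˣ) : wedge x (y * z) = wedge x y + wedge x z := by
  unfold wedge
  rw [ofMul_mul, TensorProduct.tmul_add]
  rfl

lemma wedge_inv_left (x z : Fˣ) : wedge x⁻¹ z = - wedge x z := by
  unfold wedge
  rw [ofMul_inv, TensorProduct.neg_tmul]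
  rfl

lemma wedge_inv_right (x z : Fˣ) : wedge x z⁻¹ = - wedge x z := by
  unfold wedge
  rw [ofMul_inv, TensorProduct.tmul_neg]
  rfl

lemma wedge_swap (x y : Fˣ) : wedge x y = - wedge y x := by
  rw [eq_neg_iff_add_eq_zero]
  exact (QuotientAddGroup.eq_zero_iff _).mpr (AddSubgroup.subset_closure ⟨x, y, rfl⟩)

lemma dlt_of (x : Flat F) :
    dlt F (FreeAbelianGroup.of x) = wedge (unitsOf x) (unitsOneSub x) := by
  simp [dlt]

lemma dlt_of' (x : Flat F) (p q : Fˣ) (hp : (p : F) = x.1) (hq : (q : F) = 1 - x.1) :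
    dlt F (FreeAbelianGroup.of x) = wedge p q := by
  have e1 : p = unitsOf x := Units.ext hp
  have e2 : q = unitsOneSub x := Units.ext hq
  rw [dlt_of, e1, e2]

lemma inv_aux (x z : Flat F) (hz : z.1 = x.1⁻¹) :
    dlt F (FreeAbelianGroup.of x + FreeAbelianGroup.of z)
      = wedge (Units.mk0 x.1 x.2.1) (Units.mk0 (-x.1) (neg_ne_zero.mpr x.2.1)) := by
  have h0 : x.1 ≠ 0 := x.2.1
  have h1 : (1 : F) - x.1 ≠ 0 := sub_ne_zero_of_ne (Ne.symm x.2.2)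
  have h2 : (1 : F) - z.1 ≠ 0 := sub_ne_zero_of_ne (Ne.symm z.2.2)
  rw [map_add,
    dlt_of' x (Units.mk0 x.1 h0) (Units.mk0 (-x.1) (neg_ne_zero.mpr h0) * Units.mk0 _ h2) rfl (by
      rw [Units.val_mul, Units.val_mk0, Units.val_mk0, hz]
      field_simp
      ring),
    dlt_of' z (Units.mk0 x.1 h0)⁻¹ (Units.mk0 _ h2) (by simp [hz]) rfl,
    wedge_mul_right_s7, wedge_inv_left]
  abel

lemma dlt_invEl (f : F) (hf0 : f ≠ 0) (hf1 : f ≠ 1) :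
    dlt F (invEl ⟨f, hf0, hf1⟩)
      = wedge (Units.mk0 f hf0) (Units.mk0 (-f) (neg_ne_zero.mpr hf0)) :=
  inv_aux ⟨f, hf0, hf1⟩ _ rfl

lemma five_aux (x y z₁ z₂ z₃ : Flat F) (h : x ≠ y) (e₁ : z₁.1 = y.1 / x.1)
    (e₂ : z₂.1 = (1 - x.1) / (1 - y.1)) (e₃ : z₃.1 = (1 - x.1⁻¹) / (1 - y.1⁻¹)) :
    dlt F (FreeAbelianGroup.of x - FreeAbelianGroup.of y + FreeAbelianGroup.of z₁
      + FreeAbelianGroup.of z₂ - FreeAbelianGroup.of z₃) = 0 := by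
  have hx : x.1 ≠ 0 := x.2.1
  have hy : y.1 ≠ 0 := y.2.1
  have h1x : (1 : F) - x.1 ≠ 0 := sub_ne_zero_of_ne (Ne.symm x.2.2)
  have h1y : (1 : F) - y.1 ≠ 0 := sub_ne_zero_of_ne (Ne.symm y.2.2)
  have hxy : x.1 - y.1 ≠ 0 := sub_ne_zero_of_ne (fun e => h (Subtype.ext e))
  have hx1 : x.1 - 1 ≠ 0 := sub_ne_zero_of_ne x.2.2
  have hy1 : y.1 - 1 ≠ 0 := sub_ne_zero_of_ne y.2.2
  have hq : (1 - x.1⁻¹) / (1 - y.1⁻¹) = y.1 * (1 - x.1) * (x.1⁻¹ * (1 - y.1)⁻¹) := by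
    have ex : 1 - x.1⁻¹ = (x.1 - 1) * x.1⁻¹ := by field_simp
    have ey : 1 - y.1⁻¹ = (y.1 - 1) * y.1⁻¹ := by field_simp
    have e3 : 1 - y.1 = -(y.1 - 1) := by ring
    rw [ex, ey, e3, inv_neg]
    field_simp
    ring
  rw [hq] at e₃
  obtain ⟨a, ha⟩ : ∃ a : Fˣ, (a : F) = x.1 := ⟨Units.mk0 _ hx, rfl⟩
  obtain ⟨b, hb⟩ : ∃ a : Fˣ, (a : F) = y.1 := ⟨Units.mk0 _ hy, rfl⟩
  obtain ⟨c, hc⟩ : ∃ a : Fˣ, (a : F) = 1 - x.1 := ⟨Units.mk0 _ h1x, rfl⟩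
  obtain ⟨d, hd⟩ : ∃ a : Fˣ, (a : F) = 1 - y.1 := ⟨Units.mk0 _ h1y, rfl⟩
  obtain ⟨e, he⟩ : ∃ a : Fˣ, (a : F) = x.1 - y.1 := ⟨Units.mk0 _ hxy, rfl⟩
  have D1 := dlt_of' z₁ (b * a⁻¹) (e * a⁻¹)
    (by simp only [Units.val_mul, Units.val_inv_eq_inv_val, ha, hb, e₁, div_eq_mul_inv])
    (by simp only [Units.val_mul, Units.val_inv_eq_inv_val, ha, he, e₁]; field_simp)
  have D2 := dlt_of' z₂ (c * d⁻¹) (e * d⁻¹)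
    (by simp only [Units.val_mul, Units.val_inv_eq_inv_val, hc, hd, e₂, div_eq_mul_inv])
    (by simp only [Units.val_mul, Units.val_inv_eq_inv_val, hd, he, e₂]; field_simp; ring)
  have D3 := dlt_of' z₃ (b * c * (a⁻¹ * d⁻¹)) (e * (a⁻¹ * d⁻¹))
    (by simp only [Units.val_mul, Units.val_inv_eq_inv_val, ha, hb, hc, hd, e₃])
    (by simp only [Units.val_mul, Units.val_inv_eq_inv_val, ha, hd, he, e₃]; field_simp; ring)
  rw [map_sub, map_add, map_add, map_sub, D1, D2, D3, dlt_of' x a c ha hc, dlt_of' y b d hb hd]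
  simp only [wedge_mul_left_s7, wedge_mul_right_s7, wedge_inv_left, wedge_inv_right]
  rw [wedge_swap c a, wedge_swap d a]
  abel

lemma dlt_fiveEl (x y : Flat F) (h : x ≠ y) : dlt F (fiveEl x y h) = 0 :=
  five_aux x y _ _ _ h rfl rfl rfl

lemma dlt_R5 (z : ZFlat F) (hz : z ∈ R5 F) : dlt F z = 0 := by
  have : R5 F ≤ (dlt F).ker := by
    unfold R5
    rw [AddSubgroup.closure_le]
    rintro _ ⟨x, y, h, rfl⟩
    exact dlt_fiveEl x y h
  exact this hz

/-- A parity homomorphism detects `f ∧ (-f)`. -/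
lemma wedge_ne_zero_of_hom (φ : Additive Fˣ →+ ZMod 2) (x y : Fˣ)
    (hx : φ (Additive.ofMul x) = 1) (hy : φ (Additive.ofMul y) = 1) : wedge x y ≠ 0 := by
  intro h
  let B : Tens F →ₗ[ℤ] ZMod 2 :=
    TensorProduct.lift ((LinearMap.mul ℤ (ZMod 2)).compl₁₂ φ.toIntLinearMap φ.toIntLinearMap)
  have hB : ∀ u v : Fˣ, B (Additive.ofMul u ⊗ₜ[ℤ] Additive.ofMul v)
      = φ (Additive.ofMul u) * φ (Additive.ofMul v) := fun u v =>
    TensorProduct.lift.tmul _ _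
  have hle : symRel F ≤ B.toAddMonoidHom.ker := by
    unfold symRel
    rw [AddSubgroup.closure_le]
    rintro _ ⟨u, v, rfl⟩
    rw [SetLike.mem_coe, AddMonoidHom.mem_ker, LinearMap.toAddMonoidHom_coe, map_add, hB, hB, mul_comm]
    exact CharTwo.add_self_eq_zero _
  have hm := hle ((QuotientAddGroup.eq_zero_iff _).mp h)
  have : B (Additive.ofMul x ⊗ₜ[ℤ] Additive.ofMul y) = 0 := hm
  rw [hB, hx, hy] at this
  exact absurd this (by decide)

end WedgeLemmas

section UFD

variable {R : Type*} [CommRing R] [IsDomain R] [UniqueFactorizationMonoid R]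

lemma exists_squarefree_mul_sq (a : R) (ha : a ≠ 0) :
    ∃ s q : R, a = s * q ^ 2 ∧ Squarefree s := by
  induction a using UniqueFactorizationMonoid.induction_on_prime with
  | h₁ => exact absurd rfl ha
  | h₂ x hx => exact ⟨x, 1, by simp, hx.squarefree⟩
  | h₃ a p ha0 hp ih =>
    obtain ⟨s, q, rfl, hs⟩ := ih ha0
    by_cases hd : p ∣ s
    · obtain ⟨t, rfl⟩ := hd
      exact ⟨t, p * q, by ring, hs.of_mul_right⟩
    · exact ⟨p * s, q, by ring, squarefree_mul_iff.mpr
        ⟨hp.irreducible.isRelPrime_iff_not_dvd.mpr hd, hp.irreducible.squarefree, hs⟩⟩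

lemma mult_mul {p a b : R} (hp : Prime p) (ha : a ≠ 0) (hb : b ≠ 0) :
    multiplicity p (a * b) = multiplicity p a + multiplicity p b :=
  multiplicity_mul hp (FiniteMultiplicity.of_prime_left hp (mul_ne_zero ha hb))

lemma exists_prime_odd (a : R) (ha : a ≠ 0)
    (h : ∀ u q : R, IsUnit u → a ≠ u * q ^ 2) :
    ∃ p : R, Prime p ∧ Odd (multiplicity p a) := by
  obtain ⟨s, q, rfl, hs⟩ := exists_squarefree_mul_sq a ha
  have hs0 : s ≠ 0 := fun h => ha (by simp [h])
  have hq0 : q ≠ 0 := fun h => ha (by simp [h])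
  have hsu : ¬ IsUnit s := fun hu => h s q hu rfl
  obtain ⟨p, hpi, hps⟩ := WfDvdMonoid.exists_irreducible_factor hsu hs0
  have hp : Prime p := hpi.prime
  refine ⟨p, hp, ?_⟩
  have h1 : multiplicity p s = 1 := by
    apply multiplicity_eq_of_dvd_of_not_dvd
    · simpa using hps
    · intro hd
      exact hp.not_isUnit (hs p (by simpa [pow_two] using hd))
  rw [mult_mul hp hs0 (pow_ne_zero 2 hq0), h1, pow_two, mult_mul hp hq0 hq0]
  exact ⟨multiplicity p q, by ring⟩

variable {K : Type*} [Field K] [Algebra R K] [IsFractionRing R K]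

lemma exists_num_den (x : Kˣ) : ∃ ab : R × R, ab.1 ≠ 0 ∧ ab.2 ≠ 0 ∧
    (x : K) * algebraMap R K ab.2 = algebraMap R K ab.1 := by
  obtain ⟨a, b, hb, hab⟩ := IsFractionRing.div_surjective (A := R) (x : K)
  have hb0 : b ≠ 0 := nonZeroDivisors.ne_zero hb
  have hb1 : algebraMap R K b ≠ 0 := by simpa using hb0
  refine ⟨(a, b), ?_, hb0, ?_⟩
  · rintro rfl
    exact x.ne_zero (by rw [← hab]; simp)
  · rw [← hab]
    field_simp

/-- Parity of the order at `p`. -/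
noncomputable def par (p : R) (x : Kˣ) : ZMod 2 :=
  ((multiplicity p (exists_num_den (R := R) x).choose.1
    + multiplicity p (exists_num_den (R := R) x).choose.2 : ℕ) : ZMod 2)

lemma par_eq {p : R} (hp : Prime p) (x : Kˣ) (a b : R) (ha : a ≠ 0) (hb : b ≠ 0)
    (h : (x : K) * algebraMap R K b = algebraMap R K a) :
    par p x = ((multiplicity p a + multiplicity p b : ℕ) : ZMod 2) := by
  unfold par
  obtain ⟨h1, h2, h3⟩ := (exists_num_den (R := R) x).choose_spec
  generalize (exists_num_den (R := R) x).choose = cd at *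
  obtain ⟨c, d⟩ := cd
  simp only at *
  have hh : c * b = a * d := by
    apply IsFractionRing.injective R K
    rw [map_mul, map_mul, ← h, ← h3]
    ring
  have hm := congrArg (multiplicity p) hh
  rw [mult_mul hp h1 hb, mult_mul hp ha h2] at hm
  rw [ZMod.natCast_eq_natCast_iff']
  omega

/-- The parity homomorphism. -/
noncomputable def parHom {p : R} (hp : Prime p) : Additive Kˣ →+ ZMod 2 :=
  AddMonoidHom.mk' (fun x => par p x.toMul) (by
    intro x y
    obtain ⟨⟨a, b⟩, ha, hb, hab⟩ := exists_num_den (R := R) x.toMul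
    obtain ⟨⟨c, d⟩, hc, hd, hcd⟩ := exists_num_den (R := R) y.toMul
    simp only at *
    rw [par_eq hp _ a b ha hb hab, par_eq hp _ c d hc hd hcd,
      par_eq hp _ (a * c) (b * d) (mul_ne_zero ha hc) (mul_ne_zero hb hd)
        (by rw [map_mul, map_mul, ← hab, ← hcd, toMul_add, Units.val_mul]; ring),
      mult_mul hp ha hc, mult_mul hp hb hd]
    push_cast
    ring)

lemma wedge_ne_zero (f : K) (hf0 : f ≠ 0)
    (hsq : ∀ u : R, IsUnit u → ∀ g : K, algebraMap R K u * f ≠ g ^ 2) :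
    wedge (Units.mk0 f hf0) (Units.mk0 (-f) (neg_ne_zero.mpr hf0)) ≠ 0 := by
  obtain ⟨⟨a, b⟩, ha, hb, hab⟩ := exists_num_den (R := R) (Units.mk0 f hf0)
  simp only [Units.val_mk0] at *
  have hb1 : algebraMap R K b ≠ 0 := by simpa using hb
  obtain ⟨p, hp, hodd⟩ := exists_prime_odd (a * b) (mul_ne_zero ha hb) (by
    rintro _ q ⟨u, rfl⟩ he
    apply hsq (↑u⁻¹ : R) (Units.isUnit _) (algebraMap R K q / algebraMap R K b)
    have he' := congrArg (algebraMap R K) he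
    rw [map_mul, ← hab, map_mul, map_pow] at he'
    have hu : algebraMap R K (↑u⁻¹ : R) * algebraMap R K (u : R) = 1 := by
      rw [← map_mul]; simp
    rw [div_pow, eq_div_iff (pow_ne_zero 2 hb1)]
    linear_combination algebraMap R K (↑u⁻¹ : R) * he' + (algebraMap R K q) ^ 2 * hu)
  have hone : ((multiplicity p a + multiplicity p b : ℕ) : ZMod 2) = 1 := by
    rw [← mult_mul hp ha hb]
    exact ZMod.natCast_eq_one_iff_odd.mpr hodd
  apply wedge_ne_zero_of_hom (parHom (K := K) hp)
  · exact (par_eq hp _ a b ha hb hab).trans hone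
  · refine (par_eq hp _ (-a) b (neg_ne_zero.mpr ha) hb ?_).trans ?_
    · rw [map_neg, ← hab]; simp
    · rw [multiplicity_neg]
      exact hone

end UFD

/-- Let `k` be a field, `n ≥ 1`, `K = k(t₁,…,tₙ)`, and `f ∈ K ∖ {0,1}` such that `c·f` is
not a square in `K` for any `c ∈ k*`.  Then `δ_K([f] + [f⁻¹]) = f ∧ (−f) ≠ 0` in `∧²K*`;
in particular `[f] + [f⁻¹]` does not lie in `R_5(K)`. -/
theorem invEl_not_in_R5 (k : Type*) [Field k] (n : ℕ) (hn : 1 ≤ n)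
    (f : FractionRing (MvPolynomial (Fin n) k)) (hf0 : f ≠ 0) (hf1 : f ≠ 1)
    (hsq : ∀ c : k, c ≠ 0 → ∀ g : FractionRing (MvPolynomial (Fin n) k),
      algebraMap (MvPolynomial (Fin n) k) (FractionRing (MvPolynomial (Fin n) k))
          (MvPolynomial.C c) * f ≠ g ^ 2) :
    dlt (FractionRing (MvPolynomial (Fin n) k)) (invEl ⟨f, hf0, hf1⟩)
        = wedge (Units.mk0 f hf0) (Units.mk0 (-f) (neg_ne_zero.mpr hf0)) ∧
    wedge (Units.mk0 f hf0) (Units.mk0 (-f) (neg_ne_zero.mpr hf0)) ≠ 0 ∧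
    invEl ⟨f, hf0, hf1⟩ ∉ R5 (FractionRing (MvPolynomial (Fin n) k)) := by
  have hw := wedge_ne_zero (R := MvPolynomial (Fin n) k) f hf0 (by
    intro u hu g
    obtain ⟨c, hc, rfl⟩ := MvPolynomial.isUnit_iff_eq_C_of_isReduced.mp hu
    exact hsq c hc.ne_zero g)
  refine ⟨dlt_invEl f hf0 hf1, hw, fun hmem => hw ?_⟩
  rw [← dlt_invEl f hf0 hf1]
  exact dlt_R5 _ hmem

end BlochPaper
end
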